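/- Let d be a positive natural number, m, m' ∈ ℝ^d, Δ > 0 with ‖m − m'‖₂ ≤ Δ, ε ∈ (0,1), δ ∈ (0,1), and σ ≥ (Δ/ε)·√(2·log(1.25/δ)). Let μ be the product measure on ℝ^d whose j-th factor is the Gaussian N(m_j, σ²), and ν the product measure whose j-th factor is N(m'_j, σ²). Then for every measurable set S ⊆ ℝ^d, μ(S) ≤ e^ε · ν(S) + δ. -/

import Mathlib

open MeasureTheory ProbabilityTheory

lemma pi_withDensity_aux {d : ℕ} (μ ν : Fin d → Measure ℝ) [∀ i, IsProbabilityMeasure (μ i)]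
    [∀ i, IsProbabilityMeasure (ν i)] (f : Fin d → ℝ → ENNReal) (hf : ∀ i, Measurable (f i))
    (h : ∀ i, μ i = (ν i).withDensity (f i)) :
    Measure.pi μ = (Measure.pi ν).withDensity (fun x => ∏ i, f i (x i)) := by
  symm
  refine (Measure.pi_eq fun s hs => ?_).symm
  rw [withDensity_apply _ (MeasurableSet.univ_pi hs), ← lintegral_indicator (MeasurableSet.univ_pi hs)]
  have h1 : ∀ x : Fin d → ℝ, (Set.univ.pi s).indicator (fun x => ∏ i, f i (x i)) x
      = ∏ i, (s i).indicator (f i) (x i) := by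
    intro x
    by_cases hx : x ∈ Set.univ.pi s
    · rw [Set.indicator_of_mem hx]
      refine Finset.prod_congr rfl fun i _ => ?_
      rw [Set.indicator_of_mem (hx i trivial)]
    · rw [Set.indicator_of_notMem hx]
      simp only [Set.mem_univ_pi, not_forall] at hx
      obtain ⟨i, hi⟩ := hx
      symm
      refine Finset.prod_eq_zero (Finset.mem_univ i) ?_
      rw [Set.indicator_of_notMem hi]
  simp_rw [h1]
  have hm : ∀ i, Measurable ((s i).indicator (f i)) := fun i => (hf i).indicator (hs i)
  rw [lintegral_prod_eq_prod_lintegral_of_indepFun Finset.univ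
    (fun i (x : Fin d → ℝ) => (s i).indicator (f i) (x i))
    (iIndepFun_pi (μ := ν) fun i => (hm i).aemeasurable)
    (fun i => (hm i).comp (measurable_pi_apply i))]
  refine Finset.prod_congr rfl fun i _ => ?_
  rw [(measurePreserving_eval ν i).lintegral_comp (hm i), lintegral_indicator (hs i), h i,
    withDensity_apply _ (hs i)]

lemma gauss_density (a b : ℝ) (v : NNReal) (hv : v ≠ 0) :
    gaussianReal a v = (gaussianReal b v).withDensity
      (fun x => ENNReal.ofReal (Real.exp (((x - b) ^ 2 - (x - a) ^ 2) / (2 * v)))) := by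
  rw [gaussianReal_of_var_ne_zero _ hv, gaussianReal_of_var_ne_zero _ hv,
    ← withDensity_mul _ (measurable_gaussianPDF _ _) (by fun_prop)]
  congr 1
  ext x
  simp only [Pi.mul_apply, gaussianPDF]
  rw [← ENNReal.ofReal_mul (gaussianPDFReal_nonneg _ _ _)]
  congr 1
  simp only [gaussianPDFReal]
  rw [mul_assoc _ (Real.exp _) (Real.exp _), ← Real.exp_add]
  congr 2
  ring

lemma law_aux {d : ℕ} (m w : Fin d → ℝ) (v : NNReal) (h1 : ∑ j, w j ^ 2 * v = 1) :
    (Measure.pi (fun j => gaussianReal (m j) v)).map (fun x => ∑ j, w j * (x j - m j))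
      = gaussianReal 0 1 := by
  set P := Measure.pi (fun j => gaussianReal (m j) v)
  have hind : iIndepFun (fun j (x : Fin d → ℝ) => w j * (x j - m j)) P :=
    iIndepFun_pi (μ := fun j => gaussianReal (m j) v) (X := fun j y => w j * (y - m j))
      fun i => by fun_prop
  have hlaw1 : ∀ j, (gaussianReal (m j) v).map (fun y => w j * (y - m j))
      = gaussianReal 0 (NNReal.mk (w j ^ 2) (sq_nonneg _) * v) := by
    intro j
    have : (fun y => w j * (y - m j)) = (fun y => w j * y) ∘ (fun y => y - m j) := rfl
    rw [this, ← Measure.map_map (by fun_prop) (by fun_prop),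
      gaussianReal_map_sub_const, gaussianReal_map_const_mul]
    simp
  have hG1 : ∀ j, HasGaussianLaw (fun y => w j * (y - m j)) (gaussianReal (m j) v) := fun j =>
    ⟨by rw [hlaw1]; infer_instance⟩
  have hG : ∀ j, HasGaussianLaw (fun (x : Fin d → ℝ) => w j * (x j - m j)) P := by
    intro j
    refine ⟨?_⟩
    have : (fun (x : Fin d → ℝ) => w j * (x j - m j))
      = (fun y => w j * (y - m j)) ∘ (Function.eval j) := rfl
    rw [this, ← Measure.map_map (by fun_prop) (by fun_prop), (measurePreserving_eval _ j).map_eq,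
      hlaw1]
    infer_instance
  have hg : HasGaussianLaw (fun x : Fin d → ℝ => ∑ j, w j * (x j - m j)) P :=
    (iIndepFun.hasGaussianLaw hG hind).fun_sum
  have hmean1 : ∀ j, ∫ y, w j * (y - m j) ∂(gaussianReal (m j) v) = 0 := by
    intro j
    have := integral_map (μ := gaussianReal (m j) v) (φ := fun y => w j * (y - m j))
      (f := fun x : ℝ => x) (by fun_prop) (by fun_prop)
    rw [← this, hlaw1, integral_id_gaussianReal]
  have hvar1 : ∀ j, Var[fun y => w j * (y - m j); gaussianReal (m j) v] = w j ^ 2 * v := by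
    intro j
    have := variance_map (μ := gaussianReal (m j) v) (Y := fun y => w j * (y - m j))
      (X := fun x : ℝ => x) (by fun_prop) (by fun_prop)
    rw [hlaw1, variance_fun_id_gaussianReal] at this
    rw [show (fun y => w j * (y - m j)) = (fun x : ℝ => x) ∘ (fun y => w j * (y - m j)) from rfl,
      ← this]
    simp
  have hmean : ∫ x, ∑ j, w j * (x j - m j) ∂P = 0 := by
    rw [integral_finsetSum _ fun j _ => (hG j).integrable]
    refine Finset.sum_eq_zero fun j _ => ?_
    rw [← hmean1 j]
    exact integral_comp_eval (μ := fun j => gaussianReal (m j) v) (i := j)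
      (f := fun y => w j * (y - m j)) (by fun_prop)
  have hvar : Var[fun x : Fin d → ℝ => ∑ j, w j * (x j - m j); P] = 1 := by
    have := variance_sum_pi (μ := fun j => gaussianReal (m j) v)
      (X := fun j y => w j * (y - m j)) fun j => (hG1 j).memLp_two
    rw [show (fun x : Fin d → ℝ => ∑ j, w j * (x j - m j))
      = ∑ j, fun x : Fin d → ℝ => w j * (x j - m j) by ext x; simp, this, ← h1]
    exact Finset.sum_congr rfl fun j _ => hvar1 j
  rw [hg.map_eq_gaussianReal, hmean, hvar]
  simp

lemma half_aux : gaussianReal 0 1 (Set.Ioi 0) ≤ ENNReal.ofReal (1/2) := by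
  have h1 : gaussianReal 0 1 (Set.Iio 0) = gaussianReal 0 1 (Set.Ioi 0) := by
    have := gaussianReal_map_neg (μ := 0) (v := 1)
    conv_lhs => rw [← neg_zero, ← this]
    rw [Measure.map_apply (by fun_prop) measurableSet_Iio]
    simp
  have h2 : gaussianReal 0 1 (Set.Iio 0) + gaussianReal 0 1 (Set.Ioi 0) ≤ 1 := by
    rw [← measure_union (by simp [Set.disjoint_left]; intros; linarith) measurableSet_Ioi]
    exact prob_le_one
  rw [h1] at h2
  have h3 := ENNReal.toReal_mono (by simp) h2
  rw [ENNReal.toReal_add (by simp) (by simp)] at h3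
  simp at h3
  rw [ENNReal.le_ofReal_iff_toReal_le (by simp) (by norm_num)]
  linarith

lemma tail_pos (t : ℝ) (ht : 0 ≤ t) :
    gaussianReal 0 1 (Set.Ioi t) ≤ ENNReal.ofReal (Real.exp (-t^2/2) * (1/2)) := by
  have h1 : gaussianReal 0 1 (Set.Ioi t) = gaussianReal (-t) 1 (Set.Ioi 0) := by
    have := gaussianReal_map_sub_const (μ := 0) (v := 1) t
    rw [← zero_sub, ← this, Measure.map_apply (by fun_prop) measurableSet_Ioi]
    congr 1; ext x; simp
  rw [h1, gauss_density (-t) 0 1 one_ne_zero, withDensity_apply _ measurableSet_Ioi,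
    ENNReal.ofReal_mul (by positivity)]
  calc _ ≤ ∫⁻ x in Set.Ioi 0, ENNReal.ofReal (Real.exp (-t^2/2)) ∂(gaussianReal 0 1) := by
        refine setLIntegral_mono (by fun_prop) fun x hx => ?_
        refine ENNReal.ofReal_le_ofReal (Real.exp_le_exp.2 ?_)
        have := mul_nonneg ht (le_of_lt (Set.mem_Ioi.1 hx))
        simp only [NNReal.coe_one]
        nlinarith
    _ ≤ _ := by
        rw [setLIntegral_const]
        gcongr
        exact half_aux

lemma tail_neg (t : ℝ) (ht : t ≤ 0) :
    gaussianReal 0 1 (Set.Ioi t) ≤ ENNReal.ofReal (1/2 - t/2) := by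
  rw [← Set.Ioc_union_Ioi_eq_Ioi ht]
  refine (measure_union_le _ _).trans ?_
  have : gaussianReal 0 1 (Set.Ioc t 0) ≤ ENNReal.ofReal (-t/2) := by
    rw [gaussianReal_apply _ one_ne_zero]
    calc _ ≤ ∫⁻ x in Set.Ioc t 0, ENNReal.ofReal (1/2) := by
          refine setLIntegral_mono (by fun_prop) fun x hx => ?_
          rw [gaussianPDF]
          gcongr
          rw [gaussianPDFReal]
          have h1 : (√(2 * Real.pi * ((1:NNReal):ℝ)))⁻¹ ≤ 1/2 := by
            rw [one_div]
            apply inv_anti₀ (by norm_num)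
            apply Real.le_sqrt_of_sq_le
            have := Real.pi_gt_three
            norm_num; linarith
          have h2 : Real.exp (-(x - 0) ^ 2 / (2 * ((1:NNReal):ℝ))) ≤ 1 := by
            rw [Real.exp_le_one_iff]
            simp; nlinarith [sq_nonneg x]
          calc _ ≤ (1/2:ℝ) * 1 := by gcongr
            _ = 1/2 := by norm_num
      _ = _ := by
        rw [setLIntegral_const, Real.volume_Ioc, ← ENNReal.ofReal_mul (by norm_num)]
        congr 1; ring
  calc _ ≤ ENNReal.ofReal (-t/2) + ENNReal.ofReal (1/2) := add_le_add this half_aux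
    _ = _ := by rw [← ENNReal.ofReal_add (by linarith) (by norm_num)]; congr 1; ring

lemma tail_num (c t : ℝ) (hc : 0 < c) (hc2 : 0.4 ≤ c ^ 2) (ht : c - 1 / (2 * c) ≤ t) :
    gaussianReal 0 1 (Set.Ioi t) ≤ ENNReal.ofReal (1.25 * Real.exp (-c ^ 2 / 2)) := by
  refine (measure_mono (Set.Ioi_subset_Ioi ht)).trans ?_
  rcases le_total 0 (c - 1 / (2 * c)) with h | h
  · refine (tail_pos _ h).trans (ENNReal.ofReal_le_ofReal ?_)
    have h1 : -(c - 1 / (2 * c)) ^ 2 / 2 ≤ -c ^ 2 / 2 + 1 / 2 := by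
      have : (c - 1 / (2 * c)) ^ 2 = c ^ 2 - 1 + (1 / (2 * c)) ^ 2 := by
        field_simp
        ring
      nlinarith [sq_nonneg (1 / (2 * c))]
    have h2 := Real.exp_le_exp.2 h1
    rw [Real.exp_add] at h2
    have h3 : Real.exp (1 / 2) ≤ 2.5 := by
      have h4 : Real.exp (1 / 2) ^ 2 = Real.exp 1 := by
        rw [← Real.exp_nat_mul]; norm_num
      have := Real.exp_one_lt_d9
      nlinarith [Real.exp_pos (1 / 2)]
    nlinarith [Real.exp_pos (-c ^ 2 / 2)]
  · refine (tail_neg _ h).trans (ENNReal.ofReal_le_ofReal ?_)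
    have h6 : 0.6 ≤ c := by nlinarith
    have h7 : 1 / (2 * c) ≤ 0.85 := by
      rw [div_le_iff₀ (by positivity)]; linarith
    have h8 : c ^ 2 ≤ 1 / 2 := by
      have : c ≤ 1 / (2 * c) := by linarith
      rw [le_div_iff₀ (by positivity)] at this
      nlinarith
    have := Real.add_one_le_exp (-c ^ 2 / 2)
    linarith

/-- `(ε, δ)`-differential privacy of the Gaussian mechanism: if `‖m − m'‖₂ ≤ Δ`,
`ε, δ ∈ (0,1)` and `σ ≥ (Δ/ε)·√(2 log(1.25/δ))`, then the spherical Gaussians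
`N(m, σ²I)` and `N(m', σ²I)` (products of one-dimensional Gaussians `N(m_j, σ²)` and
`N(m'_j, σ²)`) satisfy `μ(S) ≤ e^ε·ν(S) + δ` for every measurable `S ⊆ ℝ^d`. -/
theorem gaussian_mechanism_dp (d : ℕ) (hd : 0 < d) (m m' : Fin d → ℝ)
    (Δ ε δ σ : ℝ) (hΔ : 0 < Δ)
    (hnorm : Real.sqrt (∑ j, (m j - m' j) ^ 2) ≤ Δ)
    (hε : ε ∈ Set.Ioo (0 : ℝ) 1) (hδ : δ ∈ Set.Ioo (0 : ℝ) 1)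
    (hσ : σ ≥ (Δ / ε) * Real.sqrt (2 * Real.log (1.25 / δ))) :
    ∀ S : Set (Fin d → ℝ), MeasurableSet S →
      Measure.pi (fun j => gaussianReal (m j) ((σ ^ 2).toNNReal)) S
        ≤ ENNReal.ofReal (Real.exp ε)
            * Measure.pi (fun j => gaussianReal (m' j) ((σ ^ 2).toNNReal)) S
          + ENNReal.ofReal δ := by
  intro S hS
  obtain ⟨hε0, hε1⟩ := hε
  obtain ⟨hδ0, hδ1⟩ := hδ
  have hlog : 0.2 ≤ Real.log (1.25 / δ) := by
    have h1 := Real.one_sub_inv_le_log_of_pos (x := 1.25 / δ) (by positivity)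
    have h2 : (1.25 / δ)⁻¹ ≤ 0.8 := by
      rw [inv_div, div_le_iff₀ (by norm_num)]; linarith
    linarith
  set c := Real.sqrt (2 * Real.log (1.25 / δ)) with hc
  have hcsq : c ^ 2 = 2 * Real.log (1.25 / δ) := Real.sq_sqrt (by linarith)
  have hc0 : 0 < c := Real.sqrt_pos.2 (by linarith)
  have hδc : δ = 1.25 * Real.exp (-c ^ 2 / 2) := by
    rw [hcsq, show -(2 * Real.log (1.25 / δ)) / 2 = -Real.log (1.25 / δ) by ring, Real.exp_neg,
      Real.exp_log (by positivity)]
    field_simp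
  have hσ0 : 0 < σ := lt_of_lt_of_le (by positivity) hσ
  set r := Real.sqrt (∑ j, (m j - m' j) ^ 2) with hr
  have hrsq : r ^ 2 = ∑ j, (m j - m' j) ^ 2 :=
    Real.sq_sqrt (Finset.sum_nonneg fun _ _ => sq_nonneg _)
  rcases (Real.sqrt_nonneg (∑ j, (m j - m' j) ^ 2)).eq_or_lt with h0 | hr0
  · have h00 : ∑ j, (m j - m' j) ^ 2 = 0 := by rw [← hrsq, hr, ← h0]; norm_num
    have hmm : m = m' := by
      ext j
      have := (Finset.sum_eq_zero_iff_of_nonneg fun _ _ => sq_nonneg _).1 h00 j (Finset.mem_univ j)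
      have := pow_eq_zero_iff (two_ne_zero) |>.1 this
      linarith
    rw [hmm]
    refine le_add_right (le_mul_of_one_le_left zero_le ?_)
    rw [ENNReal.one_le_ofReal]
    exact Real.one_le_exp hε0.le
  rw [← hr] at hr0
  set v := (σ ^ 2).toNNReal with hv
  have hvc : (v : ℝ) = σ ^ 2 := Real.coe_toNNReal _ (sq_nonneg _)
  have hv0 : v ≠ 0 := by
    intro h
    rw [h] at hvc
    have : 0 < σ ^ 2 := by positivity
    simp at hvc
    linarith
  set Y : (Fin d → ℝ) → ℝ := fun x => ∑ j, (m j - m' j) / (r * σ) * (x j - m j) with hY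
  have hYm : Measurable Y := by fun_prop
  have hlaw : (Measure.pi (fun j => gaussianReal (m j) v)).map Y = gaussianReal 0 1 := by
    apply law_aux
    rw [hvc]
    simp_rw [div_pow, div_mul_eq_mul_div]
    rw [← Finset.sum_div, ← Finset.sum_mul, ← hrsq]
    field_simp
  have hdens := pi_withDensity_aux (fun j => gaussianReal (m j) v) (fun j => gaussianReal (m' j) v)
    (fun j x => ENNReal.ofReal (Real.exp (((x - m' j) ^ 2 - (x - m j) ^ 2) / (2 * v))))
    (fun j => by fun_prop) (fun j => gauss_density _ _ _ hv0)
  set a := r / σ with ha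
  have ha0 : 0 < a := by positivity
  have hac : a * c ≤ ε := by
    have h1 : r * c ≤ ε * σ := by
      calc r * c ≤ Δ * c := by gcongr
        _ = ε * (Δ / ε * c) := by field_simp
        _ ≤ ε * σ := by gcongr
    rw [ha, div_mul_eq_mul_div, div_le_iff₀ hσ0]
    exact h1
  have hLR : ∀ x : Fin d → ℝ,
      ∏ j, ENNReal.ofReal (Real.exp (((x j - m' j) ^ 2 - (x j - m j) ^ 2) / (2 * v)))
        = ENNReal.ofReal (Real.exp (a * Y x + a ^ 2 / 2)) := by
    intro x
    rw [← ENNReal.ofReal_prod_of_nonneg fun _ _ => (Real.exp_pos _).le, ← Real.exp_sum]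
    congr 2
    have : a ^ 2 / 2 = ∑ j, (m j - m' j) ^ 2 / (2 * σ ^ 2) := by
      rw [← Finset.sum_div, ← hrsq, ha]
      field_simp
    rw [this, hY, Finset.mul_sum, ← Finset.sum_add_distrib]
    refine Finset.sum_congr rfl fun j _ => ?_
    rw [hvc, ha]
    field_simp
    ring
  simp_rw [hLR] at hdens
  set t := ε / a - a / 2 with ht
  set B := Y ⁻¹' Set.Ioi t with hB
  have hBm : MeasurableSet B := hYm measurableSet_Ioi
  have htail : Measure.pi (fun j => gaussianReal (m j) v) B ≤ ENNReal.ofReal δ := by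
    rw [hB, ← Measure.map_apply hYm measurableSet_Ioi, hlaw, hδc]
    refine tail_num c t hc0 (by rw [hcsq]; linarith) ?_
    have h1 : c ≤ ε / a := by rw [le_div_iff₀ ha0]; linarith
    have h2 : a ≤ 1 / c := by rw [le_div_iff₀ hc0]; linarith
    have h3 : 1 / (2 * c) = 1 / c / 2 := by field_simp
    rw [h3, ht]
    linarith
  have hgood : Measure.pi (fun j => gaussianReal (m j) v) (S \ B)
      ≤ ENNReal.ofReal (Real.exp ε) * Measure.pi (fun j => gaussianReal (m' j) v) S := by
    rw [hdens, withDensity_apply _ (hS.diff hBm)]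
    calc _ ≤ ∫⁻ x in S \ B, ENNReal.ofReal (Real.exp ε)
            ∂(Measure.pi (fun j => gaussianReal (m' j) v)) := by
          refine setLIntegral_mono (by fun_prop) fun x hx => ?_
          refine ENNReal.ofReal_le_ofReal (Real.exp_le_exp.2 ?_)
          have h1 : Y x ≤ t := not_lt.1 hx.2
          calc a * Y x + a ^ 2 / 2 ≤ a * t + a ^ 2 / 2 := by gcongr
            _ = ε := by rw [ht]; field_simp; ring
      _ ≤ _ := by
          rw [setLIntegral_const]
          gcongr
          exact Set.sdiff_subset
  calc _ ≤ Measure.pi (fun j => gaussianReal (m j) v) ((S \ B) ∪ B) :=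
        measure_mono (by rw [Set.sdiff_union_self]; exact Set.subset_union_left)
    _ ≤ _ := measure_union_le _ _
    _ ≤ _ := add_le_add hgood htail
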